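/- If f : H_M → H_N is a contraction map and x, y ∈ H_M are Hamming distance preserving, then every vertex z ∈ H_M on a Hamming path between x and y maps to a vertex f(z) on a Hamming path between f(x) and f(y); that is, f(z)_r = f(x)_r for every coordinate r ∈ [N] with f(x)_r = f(y)_r. -/

import Mathlib

open Finset

/-- Weighted Hamming distance on the hypercube `{0,1}^M` (bits modeled as `Bool`):
`d_γ(x,y) = Σ_i γ_i |x_i - y_i|`. -/
def hamDist {M : ℕ} (γ : Fin M → ℤ) (x y : Fin M → Bool) : ℤ :=
  ∑ i, if x i = y i then 0 else γ i

/-- `z` is on a Hamming path between `x` and `y`: `z` agrees with `x` (and `y`)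
on every coordinate where `x` and `y` agree. -/
def onHamPath {M : ℕ} (x y z : Fin M → Bool) : Prop :=
  ∀ k, x k = y k → z k = x k

/-!
Passing through an intermediate vertex `z` costs twice the weight of the coordinates on which `x`
and `y` agree but `z` does not. This excess vanishes exactly when `z` is on a Hamming path, provided
the weights are positive, so Hamming paths are the equality case of the triangle inequality; and a
contraction that preserves `d(x, y)` cannot make the triangle inequality strict.
-/

theorem hamDist_add_hamDist {M : ℕ} (γ : Fin M → ℤ) (x y z : Fin M → Bool) :
    hamDist γ x z + hamDist γ z y = hamDist γ x y + 2 * ∑ i with x i = y i ∧ z i ≠ x i, γ i := by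
  simp only [hamDist, sum_filter, mul_sum, ← sum_add_distrib]
  refine sum_congr rfl fun i _ => ?_
  cases x i <;> cases y i <;> cases z i <;> simp [two_mul]

theorem hamDist_add_hamDist_of_onHamPath {M : ℕ} (γ : Fin M → ℤ) {x y z : Fin M → Bool}
    (hz : onHamPath x y z) : hamDist γ x z + hamDist γ z y = hamDist γ x y := by
  have no_excess : ({i | x i = y i ∧ z i ≠ x i} : Finset (Fin M)) = ∅ :=
    filter_eq_empty_iff.2 fun i _ ⟨hxy, hne⟩ => hne (hz i hxy)
  rw [hamDist_add_hamDist, no_excess, sum_empty, mul_zero, add_zero]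

theorem onHamPath_of_hamDist_add_hamDist_le {M : ℕ} {γ : Fin M → ℤ} (hγ : ∀ i, 0 < γ i)
    {x y z : Fin M → Bool} (h : hamDist γ x z + hamDist γ z y ≤ hamDist γ x y) :
    onHamPath x y z := by
  intro k hxy
  by_contra hne
  have excess_pos : 0 < ∑ i with x i = y i ∧ z i ≠ x i, γ i :=
    sum_pos (fun i _ => hγ i) ⟨k, mem_filter.2 ⟨mem_univ k, hxy, hne⟩⟩
  linarith [hamDist_add_hamDist γ x y z]

theorem stmt_1 {M N : ℕ} (α : Fin M → ℤ) (β : Fin N → ℤ)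
    (hα : ∀ i, 1 ≤ α i) (hβ : ∀ r, 1 ≤ β r)
    (f : (Fin M → Bool) → (Fin N → Bool))
    (hf : ∀ x x', hamDist β (f x) (f x') ≤ hamDist α x x')
    (x y : Fin M → Bool)
    (hdp : hamDist α x y = hamDist β (f x) (f y))
    (z : Fin M → Bool) (hz : onHamPath x y z) :
    onHamPath (f x) (f y) (f z) := by
  apply onHamPath_of_hamDist_add_hamDist_le hβ
  calc hamDist β (f x) (f z) + hamDist β (f z) (f y)
      ≤ hamDist α x z + hamDist α z y := add_le_add (hf x z) (hf z y)
    _ = hamDist α x y := hamDist_add_hamDist_of_onHamPath α hz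
    _ = hamDist β (f x) (f y) := hdp
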